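/- arXiv:1506.08376 — 2 statements merged into one kernel-verified Lean document; each statement's English description precedes it below -/
import Mathlib

section
/- Let K be an algebraically closed field and n a natural number. Every maximal ideal M of the polynomial ring K[x₁, x₂, ..., xₙ] is of the form M = (x₁ − a₁, x₂ − a₂, ..., xₙ − aₙ) for some a₁, ..., aₙ ∈ K. -/
open MvPolynomial

/-!
By Zariski's lemma the residue field of a maximal ideal `M` is `K` itself, so `M` consists of the
polynomials vanishing at the point `a` whose coordinates are the residues of the variables.
Modulo `(x₁ - a₁, …, xₙ - aₙ)` every polynomial is congruent to its value at `a`, hence the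
polynomials vanishing at `a` are exactly those in this ideal.
-/

section EvalKernel

variable {σ R : Type*} [CommRing R]

theorem sub_C_eval_mem_span_X_sub_C (a : σ → R) (p : MvPolynomial σ R) :
    p - C (eval a p) ∈ Ideal.span (Set.range fun i ↦ X i - C (a i)) := by
  set J : Ideal (MvPolynomial σ R) := Ideal.span (Set.range fun i ↦ X i - C (a i))
  have mk_eq : Ideal.Quotient.mk J = (Ideal.Quotient.mk J).comp (C.comp (eval a)) := by
    refine ringHom_ext (fun r ↦ by simp) fun i ↦ ?_
    simpa using Ideal.Quotient.eq.2 (Ideal.subset_span ⟨i, rfl⟩ : X i - C (a i) ∈ J)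
  exact Ideal.Quotient.eq.1 (RingHom.congr_fun mk_eq p)

theorem ker_eval_eq_span_X_sub_C (a : σ → R) :
    RingHom.ker (eval a) = Ideal.span (Set.range fun i ↦ X i - C (a i)) := by
  refine le_antisymm (fun p hp ↦ ?_) (Ideal.span_le.2 ?_)
  · have eval_eq_zero : eval a p = 0 := hp
    simpa [eval_eq_zero] using sub_C_eval_mem_span_X_sub_C a p
  · rintro _ ⟨i, rfl⟩
    simp [RingHom.mem_ker]

end EvalKernel

theorem vanishingIdeal_singleton_eq_ker_aeval {σ k K : Type*} [Field k] [Field K] [Algebra k K]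
    (a : σ → K) : vanishingIdeal k {a} = RingHom.ker (aeval (R := k) a) :=
  Ideal.ext fun p ↦ mem_vanishingIdeal_singleton_iff a p

theorem nullstellensatz_weak_general {σ K : Type*} [Finite σ] [Field K] [IsAlgClosed K]
    {M : Ideal (MvPolynomial σ K)} (hM : M.IsMaximal) :
    ∃ a : σ → K, M = Ideal.span (Set.range fun i ↦ X i - C (a i)) := by
  obtain ⟨a, rfl⟩ := eq_vanishingIdeal_singleton_of_isMaximal K hM
  exact ⟨a, (vanishingIdeal_singleton_eq_ker_aeval a).trans (ker_eval_eq_span_X_sub_C a)⟩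

/-- Hilbert's Nullstellensatz (weak form): over an algebraically closed field `K`,
every maximal ideal of `K[x₁, …, xₙ]` has the form `(x₁ - a₁, …, xₙ - aₙ)`. -/
theorem nullstellensatz_weak (K : Type*) [Field K] [IsAlgClosed K] (n : ℕ)
    (M : Ideal (MvPolynomial (Fin n) K)) (hM : M.IsMaximal) :
    ∃ a : Fin n → K,
      M = Ideal.span (Set.range fun i : Fin n => (X i : MvPolynomial (Fin n) K) - C (a i)) :=
  nullstellensatz_weak_general hM
end

section
/- Let D be a principal ideal domain possessing infinitely many pairwise non-associate prime elements. Then the field of fractions of D is not a finitely generated D-algebra. -/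
/-!
If `K = Frac D` is generated over `D` by finitely many fractions with common denominator `b`, then
`K = D[1/b]`, so every nonzero element of `D` divides a power of `b`. In particular every prime
divides `b`, whereas a nonzero element of an atomic domain has, up to associates, only finitely many
prime divisors.
-/

section Localization

variable {R S : Type*} [CommSemiring R] [CommSemiring S] [Algebra R S]

theorem exists_away_of_finiteType_localization (M : Submonoid R) [IsLocalization M S]
    [FaithfulSMul R S] [Algebra.FiniteType R S] : ∃ b ∈ M, IsLocalization.Away b S := by
  obtain ⟨s, hs⟩ := Algebra.FiniteType.out (R := R) (A := S)
  obtain ⟨⟨b, hbM⟩, hbs⟩ := IsLocalization.exist_integer_multiples_of_finset M s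
  have hb : IsUnit (algebraMap R S b) := IsLocalization.map_units S ⟨b, hbM⟩
  let φ : Localization.Away b →ₐ[R] S :=
    IsLocalization.Away.liftAlgHom (f := Algebra.ofId R S) b hb
  have hφ : φ.range = ⊤ := by
    rw [eq_top_iff, ← hs, Algebra.adjoin_le_iff]
    intro x hx
    obtain ⟨a, ha⟩ := hbs x hx
    refine ⟨IsLocalization.Away.invSelf b * algebraMap R _ a, hb.mul_left_cancel ?_⟩
    calc algebraMap R S b * φ (IsLocalization.Away.invSelf b * algebraMap R _ a)
        = φ (algebraMap R _ b * IsLocalization.Away.invSelf b * algebraMap R _ a) := by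
          rw [mul_assoc, map_mul φ (algebraMap R _ b), φ.commutes]
      _ = algebraMap R S b * x := by
          rw [IsLocalization.Away.mul_invSelf, one_mul, φ.commutes, ha, Algebra.smul_def]
  refine ⟨b, hbM, .mk b hb (fun x ↦ ?_) fun x y hxy ↦
    ⟨0, by rw [FaithfulSMul.algebraMap_injective R S hxy]⟩⟩
  obtain ⟨y, rfl⟩ := (AlgHom.range_eq_top φ).mp hφ x
  obtain ⟨n, a, ha⟩ := IsLocalization.Away.surj b y
  exact ⟨n, a, by simpa only [map_mul, map_pow, φ.commutes] using congrArg φ ha⟩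

theorem prime_dvd_of_isUnit_algebraMap_away {b p : R} [IsLocalization.Away b S] (hp : Prime p)
    (hunit : IsUnit (algebraMap R S p)) : p ∣ b := by
  obtain ⟨n, hn⟩ := (IsLocalization.Away.algebraMap_isUnit_iff b).mp hunit
  exact hp.dvd_of_dvd_pow hn

end Localization

theorem finite_associates_image_prime_dvd {α : Type*} [CommMonoidWithZero α] [WfDvdMonoid α]
    {a : α} (ha : a ≠ 0) : (Associates.mk '' {p | Prime p ∧ p ∣ a}).Finite := by
  obtain ⟨f, hirr, hprod⟩ := WfDvdMonoid.exists_factors a ha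
  refine (f.finite_toSet.image Associates.mk).subset ?_
  rintro _ ⟨p, ⟨hp, hpa⟩, rfl⟩
  obtain ⟨q, hqf, hpq⟩ := hp.exists_mem_multiset_dvd (hpa.trans hprod.symm.dvd)
  have hqp : Associated q p := ((hirr q hqf).dvd_iff.mp hpq).resolve_left hp.not_isUnit
  exact ⟨q, hqf, Associates.mk_eq_mk_iff_associated.mpr hqp⟩

theorem fractionRing_not_finiteType_of_infinitely_many_primes_general
    (D K : Type*) [CommRing D] [IsDomain D] [WfDvdMonoid D]
    [CommRing K] [Algebra D K] [IsFractionRing D K]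
    (S : Set D) (hS : S.Infinite) (hprime : ∀ p ∈ S, Prime p)
    (hnassoc : S.Pairwise fun p q ↦ ¬ Associated p q) :
    ¬ Algebra.FiniteType D K := by
  intro _
  obtain ⟨b, hb, _⟩ := exists_away_of_finiteType_localization (S := K) (nonZeroDivisors D)
  have hdvd : ∀ p ∈ S, p ∣ b := fun p hp ↦
    prime_dvd_of_isUnit_algebraMap_away (S := K) (hprime p hp) <|
      IsLocalization.map_units K
        (⟨p, mem_nonZeroDivisors_of_ne_zero (hprime p hp).ne_zero⟩ : nonZeroDivisors D)
  have hinj : S.InjOn Associates.mk := fun p hp q hq hpq ↦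
    hnassoc.eq hp hq (not_not.mpr (Associates.mk_eq_mk_iff_associated.mp hpq))
  refine hS.image hinj ?_
  exact (finite_associates_image_prime_dvd (nonZeroDivisors.ne_zero hb)).subset
    (Set.image_mono fun p hp ↦ ⟨hprime p hp, hdvd p hp⟩)

/-- A PID with infinitely many pairwise non-associate prime elements has a
fraction field which is not a finitely generated algebra over it. -/
theorem fractionRing_not_finiteType_of_infinitely_many_primes
    (D : Type*) [CommRing D] [IsDomain D] [IsPrincipalIdealRing D]
    (S : Set D) (hS : S.Infinite) (hprime : ∀ p ∈ S, Prime p)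
    (hnassoc : ∀ p ∈ S, ∀ q ∈ S, p ≠ q → ¬ Associated p q) :
    ¬ Algebra.FiniteType D (FractionRing D) :=
  fractionRing_not_finiteType_of_infinitely_many_primes_general D (FractionRing D) S hS hprime
    fun p hp q hq ↦ hnassoc p hp q hq
end
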